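/- There exist nonzero rational numbers C₁, C₂, C₃ such that, in U(𝔤): (E₁₁F₃₂)_L(a) = C₁·H₁₁; (E₁₁²F₃₂²)_L(b) ≡ C₂·H₀₁ (mod U(𝔤)𝔫₊); and (E₁₁³F₃₂³)_L(c) ≡ C₃·H₀₁(H₃₁+2) (mod U(𝔤)𝔫₊). -/

import Mathlib

/-- The canonical embedding of a Lie algebra into its universal enveloping algebra. -/
noncomputable def ιU {L : Type*} [LieRing L] [LieAlgebra ℂ L] (x : L) :
    UniversalEnvelopingAlgebra ℂ L :=
  UniversalEnvelopingAlgebra.ι ℂ x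

/-- The adjoint action `X_L : f ↦ Xf − fX` of `X ∈ L` on `U(L)`. -/
noncomputable def adU {L : Type*} [LieRing L] [LieAlgebra ℂ L] (x : L)
    (f : UniversalEnvelopingAlgebra ℂ L) : UniversalEnvelopingAlgebra ℂ L :=
  ιU x * f - f * ιU x

/-- A Lie algebra over `ℂ` equipped with Chevalley generators of type `G₂`:
`E₁₀, F₁₀, H₁₀` correspond to the short simple root `α` and `E₀₁, F₀₁, H₀₁` to the long
simple root `β`, subject to the Chevalley relations and the Serre relations, and the
generators generate the Lie algebra.  (By Serre's theorem such a Lie algebra is a quotient of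
the simple Lie algebra of type `G₂`.) -/
structure G2Gens (L : Type*) [LieRing L] [LieAlgebra ℂ L] where
  E10 : L
  E01 : L
  F10 : L
  F01 : L
  H10 : L
  H01 : L
  hH10H01 : ⁅H10, H01⁆ = 0
  hE10F10 : ⁅E10, F10⁆ = H10
  hE01F01 : ⁅E01, F01⁆ = H01
  hE10F01 : ⁅E10, F01⁆ = 0
  hE01F10 : ⁅E01, F10⁆ = 0
  hH10E10 : ⁅H10, E10⁆ = (2 : ℂ) • E10
  hH01E01 : ⁅H01, E01⁆ = (2 : ℂ) • E01
  hH10E01 : ⁅H10, E01⁆ = (-3 : ℂ) • E01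
  hH01E10 : ⁅H01, E10⁆ = (-1 : ℂ) • E10
  hH10F10 : ⁅H10, F10⁆ = (-2 : ℂ) • F10
  hH01F01 : ⁅H01, F01⁆ = (-2 : ℂ) • F01
  hH10F01 : ⁅H10, F01⁆ = (3 : ℂ) • F01
  hH01F10 : ⁅H01, F10⁆ = (1 : ℂ) • F10
  serreE1 : ⁅E10, ⁅E10, ⁅E10, ⁅E10, E01⁆⁆⁆⁆ = 0
  serreE2 : ⁅E01, ⁅E01, E10⁆⁆ = 0
  serreF1 : ⁅F10, ⁅F10, ⁅F10, ⁅F10, F01⁆⁆⁆⁆ = 0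
  serreF2 : ⁅F01, ⁅F01, F10⁆⁆ = 0
  generates : LieSubalgebra.lieSpan ℂ L {E10, E01, F10, F01, H10, H01} = ⊤

namespace G2Gens

variable {L : Type*} [LieRing L] [LieAlgebra ℂ L] (g : G2Gens L)

/-- The root vector `E₁₁ = [E₁₀, E₀₁]`. -/
def E11 : L := ⁅g.E10, g.E01⁆
/-- The root vector `E₂₁ = (1/2)[E₁₁, E₁₀]`. -/
noncomputable def E21 : L := (2 : ℂ)⁻¹ • ⁅g.E11, g.E10⁆
/-- The root vector `E₃₁ = (1/3)[E₂₁, E₁₀]`. -/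
noncomputable def E31 : L := (3 : ℂ)⁻¹ • ⁅g.E21, g.E10⁆
/-- The root vector `E₃₂ = [E₃₁, E₀₁]`. -/
noncomputable def E32 : L := ⁅g.E31, g.E01⁆
/-- The root vector `F₁₁ = [F₀₁, F₁₀]`. -/
def F11 : L := ⁅g.F01, g.F10⁆
/-- The root vector `F₂₁ = (1/2)[F₁₀, F₁₁]`. -/
noncomputable def F21 : L := (2 : ℂ)⁻¹ • ⁅g.F10, g.F11⁆
/-- The root vector `F₃₁ = (1/3)[F₁₀, F₂₁]`. -/
noncomputable def F31 : L := (3 : ℂ)⁻¹ • ⁅g.F10, g.F21⁆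
/-- The root vector `F₃₂ = [F₀₁, F₃₁]`. -/
noncomputable def F32 : L := ⁅g.F01, g.F31⁆
/-- The coroot `H₁₁ = H₁₀ + 3H₀₁`. -/
def H11 : L := g.H10 + (3 : ℂ) • g.H01
/-- The coroot `H₂₁ = 2H₁₀ + 3H₀₁`. -/
def H21 : L := (2 : ℂ) • g.H10 + (3 : ℂ) • g.H01
/-- The coroot `H₃₁ = H₁₀ + H₀₁`. -/
def H31 : L := g.H10 + g.H01
/-- The coroot `H₃₂ = H₁₀ + 2H₀₁`. -/
def H32 : L := g.H10 + (2 : ℂ) • g.H01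

/-- The element `a = E₂₁` of `U(𝔤)`. -/
noncomputable def aU : UniversalEnvelopingAlgebra ℂ L := ιU g.E21
/-- The element `b = E₃₁E₁₁ − E₃₂E₁₀` of `U(𝔤)`. -/
noncomputable def bU : UniversalEnvelopingAlgebra ℂ L :=
  ιU g.E31 * ιU g.E11 - ιU g.E32 * ιU g.E10
/-- The element `c = E₃₁²E₀₁ − E₃₂E₃₁H₀₁ − E₃₂²F₀₁` of `U(𝔤)`. -/
noncomputable def cU : UniversalEnvelopingAlgebra ℂ L :=
  ιU g.E31 * ιU g.E31 * ιU g.E01 - ιU g.E32 * ιU g.E31 * ιU g.H01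
    - ιU g.E32 * ιU g.E32 * ιU g.F01
/-- The element `u = (1/3)a² − b` of `U(𝔤)`. -/
noncomputable def uU : UniversalEnvelopingAlgebra ℂ L :=
  (3 : ℂ)⁻¹ • (g.aU * g.aU) - g.bU
/-- The element `v = (2/9)a³ − ab − 3c` of `U(𝔤)`. -/
noncomputable def vU : UniversalEnvelopingAlgebra ℂ L :=
  ((2 : ℂ) / 9) • (g.aU * g.aU * g.aU) - g.aU * g.bU - (3 : ℂ) • g.cU

/-- `f ≡ h (mod U(𝔤)𝔫₊)`:  `f − h` lies in the left ideal of `U(𝔤)` generated by `E₁₀`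
and `E₀₁`. -/
def EqModN (f h : UniversalEnvelopingAlgebra ℂ L) : Prop :=
  ∃ A B : UniversalEnvelopingAlgebra ℂ L, f - h = A * ιU g.E10 + B * ιU g.E01

end G2Gens

/-!
The operator `X_L` is a derivation of `U(𝔤)`, and at most three applications of `(F₃₂)_L` kill each
factor occurring in `b` and `c`. Expanding the powers of `(F₃₂)_L` gives
`F₃₂²(b) = -2 (F₀₁F₂₁ - F₃₂E₁₀)` and `F₃₂³(c) = -6 (F₀₁²F₃₁ + F₃₂F₀₁H₃₁ - F₃₂²E₃₁)`.
The left ideal `U(𝔤)𝔫₊` is stable under `(E₁₁)_L` and contains the last term in each parenthesis,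
so these terms can be dropped. As `E₁₁` commutes with `F₃₁` and `H₃₁`, what is left is to apply
powers of `(E₁₁)_L` to `F₀₁F₂₁`, `F₀₁²` and `F₃₂F₀₁`; modulo `U(𝔤)𝔫₊` left multiplication by
`X ∈ 𝔫₊` is `X_L`, which removes every positive root vector from the outcome.
-/

theorem lie_lie_eq_add_smul {R L M : Type*} [CommRing R] [LieRing L] [LieAlgebra R L]
    [AddCommGroup M] [Module R M] [LieRingModule L M] [LieModule R L M] {h x : L} {m : M} {a b : R}
    (hx : ⁅h, x⁆ = a • x) (hm : ⁅h, m⁆ = b • m) : ⁅h, ⁅x, m⁆⁆ = (a + b) • ⁅x, m⁆ := by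
  rw [leibniz_lie, hx, hm, smul_lie, lie_smul, add_smul]

namespace G2Gens

variable {L : Type*} [LieRing L] [LieAlgebra ℂ L] (g : G2Gens L)

/-! ### Brackets of positive root vectors -/

theorem lie_E10_E11 : ⁅g.E10, g.E11⁆ = (-2 : ℂ) • g.E21 := by
  rw [E21, ← lie_skew]; module

theorem lie_E10_E21 : ⁅g.E10, g.E21⁆ = (-3 : ℂ) • g.E31 := by
  rw [E31, ← lie_skew]; module

theorem lie_E10_E31 : ⁅g.E10, g.E31⁆ = 0 := by
  have h := g.serreE1
  rw [← E11, lie_E10_E11, lie_smul, lie_E10_E21, lie_smul, lie_smul] at h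
  simpa using h

theorem lie_E01_E11 : ⁅g.E01, g.E11⁆ = 0 := by
  rw [← neg_eq_zero, ← lie_neg, E11, lie_skew, g.serreE2]

theorem lie_E01_E21 : ⁅g.E01, g.E21⁆ = 0 := by
  rw [E21, lie_smul, leibniz_lie, lie_E01_E11, zero_lie, zero_add, ← lie_skew g.E01, ← E11,
    lie_neg, lie_self, neg_zero, smul_zero]

theorem lie_E11_E21 : ⁅g.E11, g.E21⁆ = (-3 : ℂ) • g.E32 := by
  rw [E11, lie_lie, lie_E01_E21, lie_E10_E21, lie_zero, lie_smul, E32, ← lie_skew g.E31]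
  module

/- The two expressions `E₃₂ = [E₃₁, E₀₁]` and `E₃₂ = -(1/3)[E₁₁, E₂₁]` give opposite values of
`[E₁₀, E₃₂]`. -/
theorem lie_E11_E31 : ⁅g.E11, g.E31⁆ = 0 := by
  have h_neg : ⁅g.E10, g.E32⁆ = -⁅g.E11, g.E31⁆ := by
    rw [E32, leibniz_lie, lie_E10_E31, zero_lie, zero_add, ← E11, lie_skew]
  have h_pos : (-3 : ℂ) • ⁅g.E10, g.E32⁆ = (-3 : ℂ) • ⁅g.E11, g.E31⁆ := by
    rw [← lie_smul, ← lie_E11_E21, leibniz_lie, lie_E10_E11, lie_E10_E21, smul_lie, lie_self,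
      smul_zero, zero_add, lie_smul]
  have h_six : (6 : ℂ) • ⁅g.E11, g.E31⁆ = 0 := by
    rw [h_neg] at h_pos
    linear_combination (norm := module) h_pos
  simpa using h_six

theorem lie_E10_E32 : ⁅g.E10, g.E32⁆ = 0 := by
  rw [E32, leibniz_lie, lie_E10_E31, zero_lie, zero_add, ← E11, ← lie_skew, lie_E11_E31, neg_zero]

theorem E32_eq_smul_lie : g.E32 = (-3 : ℂ)⁻¹ • ⁅g.E11, g.E21⁆ := by
  rw [lie_E11_E21]; module

theorem lie_E01_E32 : ⁅g.E01, g.E32⁆ = 0 := by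
  rw [E32_eq_smul_lie, lie_smul, leibniz_lie, lie_E01_E11, lie_E01_E21, zero_lie, lie_zero,
    add_zero, smul_zero]

theorem lie_E11_E32 : ⁅g.E11, g.E32⁆ = 0 := by
  rw [E11, lie_lie, lie_E10_E32, lie_E01_E32, lie_zero, lie_zero, sub_zero]

theorem lie_E21_E32 : ⁅g.E21, g.E32⁆ = 0 := by
  rw [E21, smul_lie, lie_lie, lie_E10_E32, lie_E11_E32, lie_zero, lie_zero, sub_zero, smul_zero]

theorem lie_E31_E32 : ⁅g.E31, g.E32⁆ = 0 := by
  rw [E31, smul_lie, lie_lie, lie_E10_E32, lie_E21_E32, lie_zero, lie_zero, sub_zero, smul_zero]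

section PositiveWeights

variable {g} {h : L} {a b : ℂ}

theorem lie_E11_of_weight (h10 : ⁅h, g.E10⁆ = a • g.E10)
    (h01 : ⁅h, g.E01⁆ = b • g.E01) : ⁅h, g.E11⁆ = (a + b) • g.E11 :=
  lie_lie_eq_add_smul h10 h01

theorem lie_E21_of_weight (h10 : ⁅h, g.E10⁆ = a • g.E10)
    (h01 : ⁅h, g.E01⁆ = b • g.E01) : ⁅h, g.E21⁆ = (2 * a + b) • g.E21 := by
  rw [E21, lie_smul, lie_lie_eq_add_smul (lie_E11_of_weight h10 h01) h10]; module

theorem lie_E31_of_weight (h10 : ⁅h, g.E10⁆ = a • g.E10)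
    (h01 : ⁅h, g.E01⁆ = b • g.E01) : ⁅h, g.E31⁆ = (3 * a + b) • g.E31 := by
  rw [E31, lie_smul, lie_lie_eq_add_smul (lie_E21_of_weight h10 h01) h10]; module

theorem lie_E32_of_weight (h10 : ⁅h, g.E10⁆ = a • g.E10)
    (h01 : ⁅h, g.E01⁆ = b • g.E01) : ⁅h, g.E32⁆ = (3 * a + 2 * b) • g.E32 := by
  rw [E32, lie_lie_eq_add_smul (lie_E31_of_weight h10 h01) h01]; module

end PositiveWeights

/-! ### The Chevalley involution -/

/-- The Chevalley generators `F₁₀, F₀₁, E₁₀, E₀₁, -H₁₀, -H₀₁`, obtained from `g` by the Chevalley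
involution. They transport brackets of positive root vectors to negative ones. -/
def chevalleyDual : G2Gens L where
  E10 := g.F10
  E01 := g.F01
  F10 := g.E10
  F01 := g.E01
  H10 := -g.H10
  H01 := -g.H01
  hH10H01 := by rw [neg_lie, lie_neg, neg_neg, g.hH10H01]
  hE10F10 := by rw [← lie_skew, g.hE10F10]
  hE01F01 := by rw [← lie_skew, g.hE01F01]
  hE10F01 := by rw [← lie_skew, g.hE01F10, neg_zero]
  hE01F10 := by rw [← lie_skew, g.hE10F01, neg_zero]
  hH10E10 := by rw [neg_lie, g.hH10F10]; module
  hH01E01 := by rw [neg_lie, g.hH01F01]; module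
  hH10E01 := by rw [neg_lie, g.hH10F01]; module
  hH01E10 := by rw [neg_lie, g.hH01F10]; module
  hH10F10 := by rw [neg_lie, g.hH10E10]; module
  hH01F01 := by rw [neg_lie, g.hH01E01]; module
  hH10F01 := by rw [neg_lie, g.hH10E01]; module
  hH01F10 := by rw [neg_lie, g.hH01E10]; module
  serreE1 := g.serreF1
  serreE2 := g.serreF2
  serreF1 := g.serreE1
  serreF2 := g.serreE2
  generates := by
    rw [eq_top_iff, ← g.generates, LieSubalgebra.lieSpan_le]
    set S : Set L := {g.F10, g.F01, g.E10, g.E01, -g.H10, -g.H01} with hS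
    have mem {x : L} (hx : x ∈ S) : x ∈ LieSubalgebra.lieSpan ℂ L S :=
      LieSubalgebra.subset_lieSpan hx
    rintro x (rfl | rfl | rfl | rfl | rfl | rfl)
    iterate 4 exact mem (by simp [hS])
    all_goals exact neg_mem_iff.mp (mem (by simp [hS]))

theorem chevalleyDual_E11 : g.chevalleyDual.E11 = -g.F11 := (lie_skew _ _).symm

theorem chevalleyDual_E21 : g.chevalleyDual.E21 = g.F21 := by
  rw [E21, chevalleyDual_E11, F21, neg_lie, lie_skew]; rfl

theorem chevalleyDual_E31 : g.chevalleyDual.E31 = -g.F31 := by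
  rw [E31, chevalleyDual_E21, F31, ← lie_skew, smul_neg]; rfl

theorem chevalleyDual_E32 : g.chevalleyDual.E32 = g.F32 := by
  rw [E32, chevalleyDual_E31, F32, neg_lie, lie_skew]; rfl

theorem lie_F01_F21 : ⁅g.F01, g.F21⁆ = 0 := by
  rw [← chevalleyDual_E21]; exact g.chevalleyDual.lie_E01_E21

theorem lie_F01_F32 : ⁅g.F01, g.F32⁆ = 0 := by
  rw [← chevalleyDual_E32]; exact g.chevalleyDual.lie_E01_E32

theorem lie_F21_F32 : ⁅g.F21, g.F32⁆ = 0 := by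
  simpa only [chevalleyDual_E21, chevalleyDual_E32] using g.chevalleyDual.lie_E21_E32

theorem lie_F31_F32 : ⁅g.F31, g.F32⁆ = 0 := by
  simpa only [chevalleyDual_E31, chevalleyDual_E32, neg_lie, neg_eq_zero]
    using g.chevalleyDual.lie_E31_E32

section NegativeWeights

variable {g} {h : L} {a b : ℂ}

theorem lie_F11_of_weight (h10 : ⁅h, g.F10⁆ = a • g.F10)
    (h01 : ⁅h, g.F01⁆ = b • g.F01) : ⁅h, g.F11⁆ = (a + b) • g.F11 := by
  simpa only [chevalleyDual_E11, lie_neg, smul_neg, neg_inj]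
    using g.chevalleyDual.lie_E11_of_weight h10 h01

theorem lie_F21_of_weight (h10 : ⁅h, g.F10⁆ = a • g.F10)
    (h01 : ⁅h, g.F01⁆ = b • g.F01) : ⁅h, g.F21⁆ = (2 * a + b) • g.F21 := by
  simpa only [chevalleyDual_E21] using g.chevalleyDual.lie_E21_of_weight h10 h01

theorem lie_F31_of_weight (h10 : ⁅h, g.F10⁆ = a • g.F10)
    (h01 : ⁅h, g.F01⁆ = b • g.F01) : ⁅h, g.F31⁆ = (3 * a + b) • g.F31 := by
  simpa only [chevalleyDual_E31, lie_neg, smul_neg, neg_inj]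
    using g.chevalleyDual.lie_E31_of_weight h10 h01

theorem lie_F32_of_weight (h10 : ⁅h, g.F10⁆ = a • g.F10)
    (h01 : ⁅h, g.F01⁆ = b • g.F01) : ⁅h, g.F32⁆ = (3 * a + 2 * b) • g.F32 := by
  simpa only [chevalleyDual_E32] using g.chevalleyDual.lie_E32_of_weight h10 h01

end NegativeWeights

/-! ### Brackets between positive and negative root vectors -/

theorem lie_F10_F11 : ⁅g.F10, g.F11⁆ = (2 : ℂ) • g.F21 := by
  rw [F21]; module

theorem lie_E10_F11 : ⁅g.E10, g.F11⁆ = (-3 : ℂ) • g.F01 := by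
  rw [F11, leibniz_lie, g.hE10F01, zero_lie, zero_add, g.hE10F10, ← lie_skew, g.hH10F01]
  module

theorem lie_E10_F21 : ⁅g.E10, g.F21⁆ = (2 : ℂ) • g.F11 := by
  rw [F21, lie_smul, leibniz_lie, g.hE10F10, lie_F11_of_weight g.hH10F10 g.hH10F01,
    lie_E10_F11, lie_smul, ← lie_skew g.F10, ← F11]
  module

theorem lie_E10_F31 : ⁅g.E10, g.F31⁆ = g.F21 := by
  rw [F31, lie_smul, leibniz_lie, g.hE10F10, lie_F21_of_weight g.hH10F10 g.hH10F01,
    lie_E10_F21, lie_smul, lie_F10_F11]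
  module

theorem lie_E10_F32 : ⁅g.E10, g.F32⁆ = 0 := by
  rw [F32, leibniz_lie, g.hE10F01, zero_lie, zero_add, lie_E10_F31, lie_F01_F21]

theorem lie_E01_F11 : ⁅g.E01, g.F11⁆ = g.F10 := by
  rw [F11, leibniz_lie, g.hE01F01, g.hE01F10, lie_zero, add_zero, g.hH01F10, one_smul]

theorem lie_E01_F21 : ⁅g.E01, g.F21⁆ = 0 := by
  rw [F21, lie_smul, leibniz_lie, g.hE01F10, zero_lie, zero_add, lie_E01_F11, lie_self, smul_zero]

theorem lie_E01_F31 : ⁅g.E01, g.F31⁆ = 0 := by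
  rw [F31, lie_smul, leibniz_lie, g.hE01F10, zero_lie, zero_add, lie_E01_F21, lie_zero, smul_zero]

theorem lie_E01_F32 : ⁅g.E01, g.F32⁆ = g.F31 := by
  rw [F32, leibniz_lie, g.hE01F01, lie_E01_F31, lie_zero, add_zero,
    lie_F31_of_weight g.hH01F10 g.hH01F01]
  module

theorem lie_E11_F10 : ⁅g.E11, g.F10⁆ = (-3 : ℂ) • g.E01 := by
  rw [E11, lie_lie, g.hE01F10, lie_zero, zero_sub, g.hE10F10, lie_skew, g.hH10E01]

theorem lie_E11_F01 : ⁅g.E11, g.F01⁆ = g.E10 := by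
  rw [E11, lie_lie, g.hE10F01, lie_zero, sub_zero, g.hE01F01, ← lie_skew, g.hH01E10]
  module

theorem lie_E11_F11 : ⁅g.E11, g.F11⁆ = g.H11 := by
  rw [E11, lie_lie, lie_E01_F11, lie_E10_F11, lie_smul, g.hE10F10, g.hE01F01, H11]
  module

theorem lie_E11_F21 : ⁅g.E11, g.F21⁆ = (-2 : ℂ) • g.F10 := by
  rw [E11, lie_lie, lie_E01_F21, lie_E10_F21, lie_smul, lie_E01_F11, lie_zero]
  module

theorem lie_E11_F31 : ⁅g.E11, g.F31⁆ = 0 := by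
  rw [E11, lie_lie, lie_E01_F31, lie_E10_F31, lie_E01_F21, lie_zero, sub_zero]

theorem lie_E11_F32 : ⁅g.E11, g.F32⁆ = g.F21 := by
  rw [E11, lie_lie, lie_E01_F32, lie_E10_F32, lie_E10_F31, lie_zero, sub_zero]

theorem lie_E21_F01 : ⁅g.E21, g.F01⁆ = 0 := by
  rw [E21, smul_lie, lie_lie, g.hE10F01, lie_E11_F01, lie_self, lie_zero, sub_zero, smul_zero]

theorem lie_E21_F21 : ⁅g.E21, g.F21⁆ = g.H21 := by
  rw [E21, smul_lie, lie_lie, lie_E10_F21, lie_E11_F21, lie_smul, lie_smul, lie_E11_F11,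
    g.hE10F10, H11, H21]
  module

theorem lie_E21_F31 : ⁅g.E21, g.F31⁆ = -g.F10 := by
  rw [E21, smul_lie, lie_lie, lie_E10_F31, lie_E11_F31, lie_E11_F21, lie_zero]
  module

theorem lie_E21_F32 : ⁅g.E21, g.F32⁆ = -g.F11 := by
  rw [E21, smul_lie, lie_lie, lie_E10_F32, lie_E11_F32, lie_E10_F21, lie_zero]
  module

theorem lie_E31_F01 : ⁅g.E31, g.F01⁆ = 0 := by
  rw [E31, smul_lie, lie_lie, g.hE10F01, lie_E21_F01, lie_zero, lie_zero, sub_zero, smul_zero]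

theorem lie_E31_F31 : ⁅g.E31, g.F31⁆ = g.H31 := by
  rw [E31, smul_lie, lie_lie, lie_E10_F31, lie_E21_F31, lie_E21_F21, lie_neg, g.hE10F10, H21, H31]
  module

theorem lie_E31_F32 : ⁅g.E31, g.F32⁆ = -g.F01 := by
  rw [E31, smul_lie, lie_lie, lie_E10_F32, lie_E21_F32, lie_neg, lie_E10_F11, lie_zero]
  module

theorem lie_E32_F01 : ⁅g.E32, g.F01⁆ = g.E31 := by
  rw [E32, lie_lie, lie_E31_F01, g.hE01F01, lie_zero, sub_zero, ← lie_skew,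
    lie_E31_of_weight g.hH01E10 g.hH01E01]
  module

theorem lie_E32_F31 : ⁅g.E32, g.F31⁆ = -g.E01 := by
  rw [E32, lie_lie, lie_E01_F31, lie_zero, zero_sub, lie_E31_F31, lie_skew, H31, add_lie,
    g.hH10E01, g.hH01E01]
  module

theorem lie_E32_F32 : ⁅g.E32, g.F32⁆ = g.H32 := by
  rw [E32, lie_lie, lie_E01_F32, lie_E31_F31, lie_E31_F32, lie_neg, g.hE01F01, H31, H32]
  module

theorem lie_H31_E10 : ⁅g.H31, g.E10⁆ = (1 : ℂ) • g.E10 := by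
  rw [H31, add_lie, g.hH10E10, g.hH01E10]; module

theorem lie_H31_E01 : ⁅g.H31, g.E01⁆ = (-1 : ℂ) • g.E01 := by
  rw [H31, add_lie, g.hH10E01, g.hH01E01]; module

theorem lie_H31_E11 : ⁅g.H31, g.E11⁆ = 0 := by
  rw [lie_E11_of_weight g.lie_H31_E10 g.lie_H31_E01]; module

theorem lie_H32_F10 : ⁅g.H32, g.F10⁆ = (0 : ℂ) • g.F10 := by
  rw [H32, add_lie, smul_lie, g.hH10F10, g.hH01F10]; module

theorem lie_H32_F01 : ⁅g.H32, g.F01⁆ = (-1 : ℂ) • g.F01 := by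
  rw [H32, add_lie, smul_lie, g.hH10F01, g.hH01F01]; module

theorem lie_H32_F32 : ⁅g.H32, g.F32⁆ = (-2 : ℂ) • g.F32 := by
  rw [lie_F32_of_weight g.lie_H32_F10 g.lie_H32_F01]; module

theorem lie_H01_F32 : ⁅g.H01, g.F32⁆ = -g.F32 := by
  rw [lie_F32_of_weight g.hH01F10 g.hH01F01]; module

end G2Gens


/-! ### The adjoint action on the enveloping algebra -/

section Enveloping

variable {L : Type*} [LieRing L] [LieAlgebra ℂ L]

local notation "U" => UniversalEnvelopingAlgebra ℂ L

theorem ιU_zero : ιU (0 : L) = 0 := map_zero _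

theorem ιU_neg (x : L) : ιU (-x) = -ιU x := map_neg _ x

theorem ιU_add (x y : L) : ιU (x + y) = ιU x + ιU y := map_add _ x y

theorem ιU_smul (c : ℂ) (x : L) : ιU (c • x) = c • ιU x := map_smul _ c x

theorem adU_ιU (x y : L) : adU x (ιU y) = ιU ⁅x, y⁆ := by
  simp only [ιU, adU, LieHom.map_lie, Ring.lie_def]

theorem ιU_mul_ιU (x y : L) : ιU x * ιU y = ιU y * ιU x + ιU ⁅x, y⁆ := by
  rw [← adU_ιU, adU, add_sub_cancel]

theorem adU_mul (x : L) (f h : U) : adU x (f * h) = adU x f * h + f * adU x h := by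
  simp only [adU]; noncomm_ring

theorem adU_neg (x : L) (f : U) : adU x (-f) = -adU x f := by
  simp only [adU]; noncomm_ring

theorem adU_add (x : L) (f h : U) : adU x (f + h) = adU x f + adU x h := by
  simp only [adU]; noncomm_ring

theorem adU_sub (x : L) (f h : U) : adU x (f - h) = adU x f - adU x h := by
  simp only [adU]; noncomm_ring

theorem adU_smul (x : L) (c : ℂ) (f : U) : adU x (c • f) = c • adU x f := by
  simp only [adU, mul_smul_comm, smul_mul_assoc, smul_sub]

theorem adU_iterate_sub (x : L) (n : ℕ) (f h : U) :
    (adU x)^[n] (f - h) = (adU x)^[n] f - (adU x)^[n] h :=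
  Function.Semiconj₂.iterate (adU_sub x) n f h

theorem adU_iterate_add (x : L) (n : ℕ) (f h : U) :
    (adU x)^[n] (f + h) = (adU x)^[n] f + (adU x)^[n] h :=
  Function.Semiconj₂.iterate (adU_add x) n f h

theorem adU_iterate_smul (x : L) (n : ℕ) (c : ℂ) (f : U) :
    (adU x)^[n] (c • f) = c • (adU x)^[n] f :=
  ((show Function.Commute (adU x) (c • ·) from adU_smul x c).iterate_left n) f

theorem adU_iterate_mul_of_adU_eq_zero {x : L} {h : U} (hx : adU x h = 0) (n : ℕ) (f : U) :
    (adU x)^[n] (f * h) = (adU x)^[n] f * h := by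
  induction n with
  | zero => rfl
  | succ n ih => rw [Function.iterate_succ_apply', ih, adU_mul, hx, mul_zero, add_zero,
      Function.iterate_succ_apply']

end Enveloping

namespace G2Gens

variable {L : Type*} [LieRing L] [LieAlgebra ℂ L] (g : G2Gens L)

/-! ### Powers of `F₃₂` -/

theorem adU_F32_E10 : adU g.F32 (ιU g.E10) = 0 := by
  rw [adU_ιU, ← lie_skew, lie_E10_F32, neg_zero, ιU_zero]

theorem adU_F32_E01 : adU g.F32 (ιU g.E01) = -ιU g.F31 := by
  rw [adU_ιU, ← lie_skew, lie_E01_F32, ιU_neg]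

theorem adU_F32_E11 : adU g.F32 (ιU g.E11) = -ιU g.F21 := by
  rw [adU_ιU, ← lie_skew, lie_E11_F32, ιU_neg]

theorem adU_F32_E21 : adU g.F32 (ιU g.E21) = ιU g.F11 := by
  rw [adU_ιU, ← lie_skew, lie_E21_F32, neg_neg]

theorem adU_F32_E31 : adU g.F32 (ιU g.E31) = ιU g.F01 := by
  rw [adU_ιU, ← lie_skew, lie_E31_F32, neg_neg]

theorem adU_F32_E32 : adU g.F32 (ιU g.E32) = -ιU g.H32 := by
  rw [adU_ιU, ← lie_skew, lie_E32_F32, ιU_neg]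

theorem adU_F32_H32 : adU g.F32 (ιU g.H32) = (2 : ℂ) • ιU g.F32 := by
  rw [adU_ιU, ← lie_skew, lie_H32_F32, ιU_neg, ιU_smul]; module

theorem adU_F32_H01 : adU g.F32 (ιU g.H01) = ιU g.F32 := by
  rw [adU_ιU, ← lie_skew, lie_H01_F32, neg_neg]

theorem adU_F32_F01 : adU g.F32 (ιU g.F01) = 0 := by
  rw [adU_ιU, ← lie_skew, lie_F01_F32, neg_zero, ιU_zero]

theorem adU_F32_F21 : adU g.F32 (ιU g.F21) = 0 := by
  rw [adU_ιU, ← lie_skew, lie_F21_F32, neg_zero, ιU_zero]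

theorem adU_F32_F31 : adU g.F32 (ιU g.F31) = 0 := by
  rw [adU_ιU, ← lie_skew, lie_F31_F32, neg_zero, ιU_zero]

theorem adU_F32_F32 : adU g.F32 (ιU g.F32) = 0 := by
  rw [adU_ιU, lie_self, ιU_zero]

theorem adU_F32_iterate_two_E31_mul_E11 :
    (adU g.F32)^[2] (ιU g.E31 * ιU g.E11) = (-2 : ℂ) • (ιU g.F01 * ιU g.F21) := by
  simp only [Function.iterate_succ_apply', Function.iterate_zero_apply, adU_mul, adU_add, adU_neg,
    adU_F32_E31, adU_F32_E11, adU_F32_F01, adU_F32_F21, zero_mul, mul_neg, mul_zero]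
  module

theorem adU_F32_iterate_two_E32_mul_E10 :
    (adU g.F32)^[2] (ιU g.E32 * ιU g.E10) = (-2 : ℂ) • (ιU g.F32 * ιU g.E10) := by
  simp only [Function.iterate_succ_apply', Function.iterate_zero_apply, adU_mul, adU_neg,
    adU_F32_E32, adU_F32_H32, adU_F32_E10, neg_mul, smul_mul_assoc, mul_zero, add_zero]
  module

theorem adU_F32_iterate_two_bU :
    (adU g.F32)^[2] g.bU = (-2 : ℂ) • (ιU g.F01 * ιU g.F21 - ιU g.F32 * ιU g.E10) := by
  rw [bU, adU_iterate_sub, adU_F32_iterate_two_E31_mul_E11, adU_F32_iterate_two_E32_mul_E10,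
    smul_sub]

theorem adU_F32_iterate_three_E31_mul_E31_mul_E01 :
    (adU g.F32)^[3] (ιU g.E31 * ιU g.E31 * ιU g.E01) =
      (-6 : ℂ) • (ιU g.F01 * ιU g.F01 * ιU g.F31) := by
  simp only [Function.iterate_succ_apply', Function.iterate_zero_apply, adU_mul, adU_add, adU_neg,
    adU_F32_E31, adU_F32_E01, adU_F32_F01, adU_F32_F31, add_mul, zero_mul, mul_neg, mul_zero,
    add_zero, zero_add]
  module

theorem adU_F32_iterate_three_E32_mul_E31_mul_H01 :
    (adU g.F32)^[3] (ιU g.E32 * ιU g.E31 * ιU g.H01) =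
      (-6 : ℂ) • (ιU g.H32 * ιU g.F01 * ιU g.F32 + ιU g.F32 * ιU g.F01 * ιU g.H01
        + ιU g.F32 * ιU g.E31 * ιU g.F32) := by
  simp only [Function.iterate_succ_apply', Function.iterate_zero_apply, adU_mul, adU_add, adU_neg,
    adU_smul, adU_F32_E32, adU_F32_E31, adU_F32_H32, adU_F32_H01, adU_F32_F01, adU_F32_F32,
    add_mul, neg_mul, smul_mul_assoc, zero_mul, mul_zero, add_zero, zero_add]
  module

theorem adU_F32_iterate_three_E32_mul_E32_mul_F01 :
    (adU g.F32)^[3] (ιU g.E32 * ιU g.E32 * ιU g.F01) =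
      (6 : ℂ) • (ιU g.H32 * ιU g.F32 * ιU g.F01 + ιU g.F32 * ιU g.H32 * ιU g.F01) := by
  simp only [Function.iterate_succ_apply', Function.iterate_zero_apply, adU_mul, adU_add, adU_neg,
    adU_smul, adU_F32_E32, adU_F32_H32, adU_F32_F01, adU_F32_F32, add_mul, neg_mul,
    mul_neg, smul_mul_assoc, mul_smul_comm, zero_mul, mul_zero, add_zero, zero_add]
  module

theorem adU_F32_iterate_three_cU :
    (adU g.F32)^[3] g.cU =
      (-6 : ℂ) • (ιU g.F01 * ιU g.F01 * ιU g.F31 + ιU g.F32 * ιU g.F01 * ιU g.H31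
        - ιU g.F32 * ιU g.F32 * ιU g.E31) := by
  have F01_F32 : ιU g.F01 * ιU g.F32 = ιU g.F32 * ιU g.F01 := by
    rw [ιU_mul_ιU, lie_F01_F32, ιU_zero, add_zero]
  have E31_F32 : ιU g.E31 * ιU g.F32 = ιU g.F32 * ιU g.E31 - ιU g.F01 := by
    rw [ιU_mul_ιU, lie_E31_F32, ιU_neg, sub_eq_add_neg]
  have H32_F01 : ιU g.H32 * ιU g.F01 = ιU g.F01 * ιU g.H32 - ιU g.F01 := by
    rw [ιU_mul_ιU, lie_H32_F01, neg_one_smul, ιU_neg, sub_eq_add_neg]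
  have H32_eq : ιU g.H32 = ιU g.H31 + ιU g.H01 := by
    rw [← ιU_add, H32, H31]; congr 1; module
  rw [cU, adU_iterate_sub, adU_iterate_sub, adU_F32_iterate_three_E31_mul_E31_mul_E01,
    adU_F32_iterate_three_E32_mul_E31_mul_H01, adU_F32_iterate_three_E32_mul_E32_mul_F01]
  simp only [mul_assoc, F01_F32]
  simp only [E31_F32, H32_F01, mul_sub]
  rw [H32_eq, mul_add, mul_add]
  module

/-! ### The left ideal generated by the positive part -/

/-- The left ideal `U(𝔤)𝔫₊` of the enveloping algebra, generated by `E₁₀` and `E₀₁`. -/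
noncomputable def posLeftIdeal : Ideal (UniversalEnvelopingAlgebra ℂ L) :=
  Ideal.span {ιU g.E10, ιU g.E01}

theorem eqModN_iff {f h : UniversalEnvelopingAlgebra ℂ L} :
    g.EqModN f h ↔ f ≡ h [SMOD g.posLeftIdeal] := by
  simp only [SModEq.sub_mem, posLeftIdeal, Ideal.mem_span_pair, EqModN, eq_comm]

theorem E10_mem_posLeftIdeal : ιU g.E10 ∈ g.posLeftIdeal :=
  Ideal.subset_span (Set.mem_insert _ _)

theorem E01_mem_posLeftIdeal : ιU g.E01 ∈ g.posLeftIdeal :=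
  Ideal.subset_span (Set.mem_insert_of_mem _ rfl)

section

variable {g}

theorem smul_mem_posLeftIdeal (c : ℂ) {f : UniversalEnvelopingAlgebra ℂ L}
    (hf : f ∈ g.posLeftIdeal) : c • f ∈ g.posLeftIdeal :=
  Submodule.smul_of_tower_mem _ c hf

theorem lie_mem_posLeftIdeal {x y : L} (hx : ιU x ∈ g.posLeftIdeal)
    (hy : ιU y ∈ g.posLeftIdeal) : ιU ⁅x, y⁆ ∈ g.posLeftIdeal := by
  rw [← adU_ιU, adU]
  exact sub_mem (Ideal.mul_mem_left _ _ hy) (Ideal.mul_mem_left _ _ hx)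

theorem mul_mem_posLeftIdeal {y : L} (h10 : ιU ⁅g.E10, y⁆ ∈ g.posLeftIdeal)
    (h01 : ιU ⁅g.E01, y⁆ ∈ g.posLeftIdeal) {f : UniversalEnvelopingAlgebra ℂ L}
    (hf : f ∈ g.posLeftIdeal) : f * ιU y ∈ g.posLeftIdeal := by
  obtain ⟨a, b, rfl⟩ := Ideal.mem_span_pair.mp hf
  rw [add_mul, mul_assoc, mul_assoc, ιU_mul_ιU g.E10, ιU_mul_ιU g.E01]
  exact add_mem
    (Ideal.mul_mem_left _ _ (add_mem (Ideal.mul_mem_left _ _ g.E10_mem_posLeftIdeal) h10))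
    (Ideal.mul_mem_left _ _ (add_mem (Ideal.mul_mem_left _ _ g.E01_mem_posLeftIdeal) h01))

theorem mul_smodEq_lie {x : L} (hx : ιU x ∈ g.posLeftIdeal) (y : L) :
    ιU x * ιU y ≡ ιU ⁅x, y⁆ [SMOD g.posLeftIdeal] := by
  rw [SModEq.sub_mem, ιU_mul_ιU, add_sub_cancel_right]
  exact Ideal.mul_mem_left _ _ hx

theorem smul_smodEq_smul (c : ℂ) {f h : UniversalEnvelopingAlgebra ℂ L}
    (hfh : f ≡ h [SMOD g.posLeftIdeal]) : c • f ≡ c • h [SMOD g.posLeftIdeal] := by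
  rw [SModEq.sub_mem, ← smul_sub]
  exact smul_mem_posLeftIdeal c (SModEq.sub_mem.mp hfh)

theorem mul_mul_smodEq_lie_lie {x y : L} (hx : ιU x ∈ g.posLeftIdeal)
    (hy : ιU y ∈ g.posLeftIdeal) (z : L) :
    ιU x * ιU y * ιU z ≡ ιU ⁅x, ⁅y, z⁆⁆ [SMOD g.posLeftIdeal] := by
  rw [mul_assoc]
  exact ((mul_smodEq_lie hy z).smul (ιU x)).trans (mul_smodEq_lie hx ⁅y, z⁆)

end

theorem E11_mem_posLeftIdeal : ιU g.E11 ∈ g.posLeftIdeal :=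
  lie_mem_posLeftIdeal g.E10_mem_posLeftIdeal g.E01_mem_posLeftIdeal

theorem E21_mem_posLeftIdeal : ιU g.E21 ∈ g.posLeftIdeal := by
  rw [E21, ιU_smul]
  exact smul_mem_posLeftIdeal _
    (lie_mem_posLeftIdeal g.E11_mem_posLeftIdeal g.E10_mem_posLeftIdeal)

theorem E31_mem_posLeftIdeal : ιU g.E31 ∈ g.posLeftIdeal := by
  rw [E31, ιU_smul]
  exact smul_mem_posLeftIdeal _
    (lie_mem_posLeftIdeal g.E21_mem_posLeftIdeal g.E10_mem_posLeftIdeal)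

theorem E32_mem_posLeftIdeal : ιU g.E32 ∈ g.posLeftIdeal :=
  lie_mem_posLeftIdeal g.E31_mem_posLeftIdeal g.E01_mem_posLeftIdeal

section

variable {g}

theorem mul_H31_mem_posLeftIdeal {f : UniversalEnvelopingAlgebra ℂ L}
    (hf : f ∈ g.posLeftIdeal) : f * ιU g.H31 ∈ g.posLeftIdeal := by
  refine mul_mem_posLeftIdeal ?_ ?_ hf
  · rw [← lie_skew, lie_H31_E10, ← neg_smul, ιU_smul]
    exact smul_mem_posLeftIdeal _ g.E10_mem_posLeftIdeal
  · rw [← lie_skew, lie_H31_E01, ← neg_smul, ιU_smul]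
    exact smul_mem_posLeftIdeal _ g.E01_mem_posLeftIdeal

theorem adU_E11_mem_posLeftIdeal {f : UniversalEnvelopingAlgebra ℂ L}
    (hf : f ∈ g.posLeftIdeal) : adU g.E11 f ∈ g.posLeftIdeal :=
  sub_mem (Ideal.mul_mem_left _ _ hf) <| mul_mem_posLeftIdeal
    (lie_mem_posLeftIdeal g.E10_mem_posLeftIdeal g.E11_mem_posLeftIdeal)
    (lie_mem_posLeftIdeal g.E01_mem_posLeftIdeal g.E11_mem_posLeftIdeal) hf

theorem adU_E11_iterate_mem_posLeftIdeal (n : ℕ) {f : UniversalEnvelopingAlgebra ℂ L}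
    (hf : f ∈ g.posLeftIdeal) : (adU g.E11)^[n] f ∈ g.posLeftIdeal :=
  Set.MapsTo.iterate (fun _ ↦ adU_E11_mem_posLeftIdeal) n hf

theorem adU_E11_iterate_sub_smodEq (n : ℕ) (f : UniversalEnvelopingAlgebra ℂ L)
    {h : UniversalEnvelopingAlgebra ℂ L} (hh : h ∈ g.posLeftIdeal) :
    (adU g.E11)^[n] (f - h) ≡ (adU g.E11)^[n] f [SMOD g.posLeftIdeal] := by
  rw [adU_iterate_sub, SModEq.sub_mem, sub_sub_cancel_left]
  exact neg_mem (adU_E11_iterate_mem_posLeftIdeal n hh)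

end

/-! ### Powers of `E₁₁` -/

theorem adU_E11_F10 : adU g.E11 (ιU g.F10) = (-3 : ℂ) • ιU g.E01 := by
  rw [adU_ιU, lie_E11_F10, ιU_smul]

theorem adU_E11_F01 : adU g.E11 (ιU g.F01) = ιU g.E10 := by
  rw [adU_ιU, lie_E11_F01]

theorem adU_E11_F21 : adU g.E11 (ιU g.F21) = (-2 : ℂ) • ιU g.F10 := by
  rw [adU_ιU, lie_E11_F21, ιU_smul]

theorem adU_E11_F31 : adU g.E11 (ιU g.F31) = 0 := by
  rw [adU_ιU, lie_E11_F31, ιU_zero]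

theorem adU_E11_F32 : adU g.E11 (ιU g.F32) = ιU g.F21 := by
  rw [adU_ιU, lie_E11_F32]

theorem adU_E11_H31 : adU g.E11 (ιU g.H31) = 0 := by
  rw [adU_ιU, ← lie_skew, lie_H31_E11, neg_zero, ιU_zero]

theorem adU_E11_E10 : adU g.E11 (ιU g.E10) = (2 : ℂ) • ιU g.E21 := by
  rw [adU_ιU, ← lie_skew, lie_E10_E11, ← neg_smul, neg_neg, ιU_smul]

theorem adU_E11_E21 : adU g.E11 (ιU g.E21) = (-3 : ℂ) • ιU g.E32 := by
  rw [adU_ιU, lie_E11_E21, ιU_smul]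

theorem adU_E11_iterate_two_F01_mul_F21 :
    (adU g.E11)^[2] (ιU g.F01 * ιU g.F21) =
      (2 : ℂ) • (ιU g.E21 * ιU g.F21) - (4 : ℂ) • (ιU g.E10 * ιU g.F10)
        + (6 : ℂ) • (ιU g.F01 * ιU g.E01) := by
  simp only [Function.iterate_succ_apply', Function.iterate_zero_apply, adU_mul, adU_add, adU_smul,
    adU_E11_F01, adU_E11_F21, adU_E11_E10, adU_E11_F10, smul_mul_assoc, mul_smul_comm]
  module

theorem adU_E11_iterate_three_F01_mul_F01 :
    (adU g.E11)^[3] (ιU g.F01 * ιU g.F01) =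
      (6 : ℂ) • (ιU g.E10 * ιU g.E21 + ιU g.E21 * ιU g.E10
        - ιU g.E32 * ιU g.F01 - ιU g.F01 * ιU g.E32) := by
  simp only [Function.iterate_succ_apply', Function.iterate_zero_apply, adU_mul, adU_add, adU_smul,
    adU_E11_F01, adU_E11_E10, adU_E11_E21, smul_mul_assoc, mul_smul_comm]
  module

theorem adU_E11_iterate_three_F32_mul_F01 :
    (adU g.E11)^[3] (ιU g.F32 * ιU g.F01) =
      (6 : ℂ) • (ιU g.E01 * ιU g.F01 - ιU g.F10 * ιU g.E10
        + ιU g.F21 * ιU g.E21 - ιU g.F32 * ιU g.E32) := by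
  simp only [Function.iterate_succ_apply', Function.iterate_zero_apply, adU_mul, adU_add, adU_smul,
    adU_E11_F32, adU_E11_F21, adU_E11_F10, adU_E11_F01, adU_E11_E10, adU_E11_E21, smul_mul_assoc,
    mul_smul_comm]
  module

theorem adU_E11_iterate_two_F01_mul_F21_smodEq :
    (adU g.E11)^[2] (ιU g.F01 * ιU g.F21) ≡ (6 : ℂ) • ιU g.H01 [SMOD g.posLeftIdeal] := by
  have E21_F21 : ιU g.E21 * ιU g.F21 ≡ ιU g.H21 [SMOD g.posLeftIdeal] := by
    simpa only [lie_E21_F21] using mul_smodEq_lie g.E21_mem_posLeftIdeal g.F21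
  have E10_F10 : ιU g.E10 * ιU g.F10 ≡ ιU g.H10 [SMOD g.posLeftIdeal] := by
    simpa only [g.hE10F10] using mul_smodEq_lie g.E10_mem_posLeftIdeal g.F10
  have F01_E01 : ιU g.F01 * ιU g.E01 ≡ 0 [SMOD g.posLeftIdeal] :=
    SModEq.zero.mpr (Ideal.mul_mem_left _ _ g.E01_mem_posLeftIdeal)
  rw [adU_E11_iterate_two_F01_mul_F21]
  convert ((smul_smodEq_smul 2 E21_F21).sub (smul_smodEq_smul 4 E10_F10)).add
    (smul_smodEq_smul 6 F01_E01) using 1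
  rw [H21, ιU_add, ιU_smul, ιU_smul]
  module

theorem adU_E11_iterate_three_F01_mul_F01_mul_F31_smodEq :
    (adU g.E11)^[3] (ιU g.F01 * ιU g.F01 * ιU g.F31) ≡ (12 : ℂ) • ιU g.H01
      [SMOD g.posLeftIdeal] := by
  have E10_E21_F31 : ιU g.E10 * ιU g.E21 * ιU g.F31 ≡ -ιU g.H10 [SMOD g.posLeftIdeal] := by
    simpa only [lie_E21_F31, lie_neg, g.hE10F10, ιU_neg] using
      mul_mul_smodEq_lie_lie g.E10_mem_posLeftIdeal g.E21_mem_posLeftIdeal g.F31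
  have E21_E10_F31 : ιU g.E21 * ιU g.E10 * ιU g.F31 ≡ ιU g.H21 [SMOD g.posLeftIdeal] := by
    simpa only [lie_E10_F31, lie_E21_F21] using
      mul_mul_smodEq_lie_lie g.E21_mem_posLeftIdeal g.E10_mem_posLeftIdeal g.F31
  have F01_E32_F31 : ιU g.F01 * ιU g.E32 * ιU g.F31 ≡ 0 [SMOD g.posLeftIdeal] := by
    rw [mul_assoc, ιU_mul_ιU g.E32, lie_E32_F31, ιU_neg, SModEq.zero]
    exact Ideal.mul_mem_left _ _ (add_mem (Ideal.mul_mem_left _ _ g.E32_mem_posLeftIdeal)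
      (neg_mem g.E01_mem_posLeftIdeal))
  have E32_F01_F31 : ιU g.E32 * ιU g.F01 * ιU g.F31 ≡ ιU g.H31 [SMOD g.posLeftIdeal] := by
    rw [ιU_mul_ιU g.E32, lie_E32_F01, add_mul]
    simpa only [lie_E31_F31, zero_add] using
      F01_E32_F31.add (mul_smodEq_lie g.E31_mem_posLeftIdeal g.F31)
  rw [adU_iterate_mul_of_adU_eq_zero g.adU_E11_F31, adU_E11_iterate_three_F01_mul_F01,
    smul_mul_assoc, sub_mul, sub_mul, add_mul]
  convert smul_smodEq_smul 6
    (((E10_E21_F31.add E21_E10_F31).sub E32_F01_F31).sub F01_E32_F31) using 1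
  rw [H21, H31, ιU_add, ιU_add, ιU_smul, ιU_smul]
  module

theorem adU_E11_iterate_three_F32_mul_F01_smodEq :
    (adU g.E11)^[3] (ιU g.F32 * ιU g.F01) ≡ (6 : ℂ) • ιU g.H01 [SMOD g.posLeftIdeal] := by
  have E01_F01 : ιU g.E01 * ιU g.F01 ≡ ιU g.H01 [SMOD g.posLeftIdeal] := by
    simpa only [g.hE01F01] using mul_smodEq_lie g.E01_mem_posLeftIdeal g.F01
  have mul_left {x : L} (hx : ιU x ∈ g.posLeftIdeal) (y : L) :
      ιU y * ιU x ≡ 0 [SMOD g.posLeftIdeal] :=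
    SModEq.zero.mpr (Ideal.mul_mem_left _ _ hx)
  rw [adU_E11_iterate_three_F32_mul_F01]
  simpa only [sub_zero, add_zero] using smul_smodEq_smul 6
    (((E01_F01.sub (mul_left g.E10_mem_posLeftIdeal g.F10)).add
      (mul_left g.E21_mem_posLeftIdeal g.F21)).sub (mul_left g.E32_mem_posLeftIdeal g.F32))

theorem adU_E11_iterate_three_F32_mul_F01_mul_H31_smodEq :
    (adU g.E11)^[3] (ιU g.F32 * ιU g.F01 * ιU g.H31) ≡ (6 : ℂ) • (ιU g.H01 * ιU g.H31)
      [SMOD g.posLeftIdeal] := by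
  rw [adU_iterate_mul_of_adU_eq_zero g.adU_E11_H31, SModEq.sub_mem, ← smul_mul_assoc, ← sub_mul]
  exact mul_H31_mem_posLeftIdeal (SModEq.sub_mem.mp g.adU_E11_iterate_three_F32_mul_F01_smodEq)

theorem adU_E11_adU_F32_aU : adU g.E11 (adU g.F32 g.aU) = ιU g.H11 := by
  rw [aU, adU_F32_E21, adU_ιU, lie_E11_F11]

theorem adU_E11_iterate_two_adU_F32_bU_smodEq :
    (adU g.E11)^[2] ((adU g.F32)^[2] g.bU) ≡ (-12 : ℂ) • ιU g.H01 [SMOD g.posLeftIdeal] := by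
  rw [adU_F32_iterate_two_bU, adU_iterate_smul]
  convert smul_smodEq_smul (-2)
    ((g.adU_E11_iterate_sub_smodEq 2 _ (Ideal.mul_mem_left _ _ g.E10_mem_posLeftIdeal)).trans
      g.adU_E11_iterate_two_F01_mul_F21_smodEq) using 1
  module

theorem adU_E11_iterate_three_adU_F32_cU_smodEq :
    (adU g.E11)^[3] ((adU g.F32)^[3] g.cU) ≡ (-36 : ℂ) • (ιU g.H01 * (ιU g.H31 + 2))
      [SMOD g.posLeftIdeal] := by
  have main : (adU g.E11)^[3] (ιU g.F01 * ιU g.F01 * ιU g.F31 + ιU g.F32 * ιU g.F01 * ιU g.H31) ≡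
      (12 : ℂ) • ιU g.H01 + (6 : ℂ) • (ιU g.H01 * ιU g.H31) [SMOD g.posLeftIdeal] := by
    rw [adU_iterate_add]
    exact g.adU_E11_iterate_three_F01_mul_F01_mul_F31_smodEq.add
      g.adU_E11_iterate_three_F32_mul_F01_mul_H31_smodEq
  rw [adU_F32_iterate_three_cU, adU_iterate_smul]
  convert smul_smodEq_smul (-6) ((g.adU_E11_iterate_sub_smodEq 3 _
    (Ideal.mul_mem_left _ _ g.E31_mem_posLeftIdeal)).trans main) using 1
  rw [mul_add, mul_two]
  module

end G2Gens

/-- **Lemma A.5, third family (lem-secondstep).**  Congruences in `U(𝔤)` modulo `U(𝔤)𝔫₊`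
for the operators `(E₁₁^n F₃₂^n)_L` applied to `a`, `b`, `c`. -/
theorem G2Gens.E11F32_congruences
    {L : Type*} [LieRing L] [LieAlgebra ℂ L] (g : G2Gens L) :
    ∃ C₁ C₂ C₃ : ℚ, C₁ ≠ 0 ∧ C₂ ≠ 0 ∧ C₃ ≠ 0 ∧
      adU g.E11 (adU g.F32 g.aU) = (C₁ : ℂ) • ιU g.H11 ∧
      g.EqModN ((adU g.E11)^[2] ((adU g.F32)^[2] g.bU)) ((C₂ : ℂ) • ιU g.H01) ∧
      g.EqModN ((adU g.E11)^[3] ((adU g.F32)^[3] g.cU))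
        ((C₃ : ℂ) • (ιU g.H01 * (ιU g.H31 + 2))) := by
  refine ⟨1, -12, -36, by norm_num, by norm_num, by norm_num, ?_, ?_, ?_⟩
  · rw [Rat.cast_one, one_smul, g.adU_E11_adU_F32_aU]
  · simpa [eqModN_iff] using g.adU_E11_iterate_two_adU_F32_bU_smodEq
  · simpa [eqModN_iff] using g.adU_E11_iterate_three_adU_F32_cU_smodEq
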